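/- The itinerary map I, restricted to the set of irrational real numbers with the subspace topology and mapping into the sequence space ({0,2,4})^ℕ with the product topology, is continuous and satisfies the semiconjugacy identity I(f_Γ(x)) = σ(I(x)) for every irrational x, where σ is the one-sided shift σ(s)(n) = s(n+1). -/

import Mathlib

/-!
The breakpoints `-1` and `1`, where the branches of `fGamma` and `symb` meet, and the pole `0` of
`x ↦ -1 / x` are rational, so near an irrational point each of the two maps agrees with a single
continuous branch. Since `fGamma` preserves irrationality, every iterate is therefore continuous at
every irrational point, and so is each coordinate `symb ∘ fGamma^[n]` of the itinerary.
Continuity into the product follows coordinatewise. The semiconjugacy is the identity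
`f^[n] (f x) = f^[n + 1] x`.
-/

noncomputable def fGamma (x : ℝ) : ℝ :=
  if x ≤ -1 then x + 1
  else if x < 1 then -1 / x
  else x - 1

/-- The symbol of a point: 2 on (-∞,-1), 0 on (-1,1), 4 on (1,∞). -/
noncomputable def symb (x : ℝ) : ℕ :=
  if x < -1 then 2 else if x < 1 then 0 else 4

/-- The itinerary of a point under `fGamma`. -/
noncomputable def itin (x : ℝ) : ℕ → ℕ :=
  fun n => symb (fGamma^[n] x)

theorem irrational_trichotomy {x : ℝ} (hx : Irrational x) :
    x < -1 ∨ (-1 < x ∧ x < 1) ∨ 1 < x := by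
  have h1 : x ≠ 1 := hx.ne_one
  have h2 : x ≠ -1 := by simpa using hx.ne_int (-1)
  grind

theorem irrational_fGamma {x : ℝ} (hx : Irrational x) : Irrational (fGamma x) := by
  unfold fGamma
  split_ifs
  · simpa using hx.add_intCast 1
  · have h : -1 / x = -x⁻¹ := by ring
    rw [h]
    exact hx.inv.neg
  · simpa using hx.sub_intCast 1

theorem irrational_iterate_fGamma {x : ℝ} (hx : Irrational x) (n : ℕ) :
    Irrational (fGamma^[n] x) := by
  induction n with
  | zero => exact hx
  | succ n ih =>
    rw [Function.iterate_succ_apply']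
    exact irrational_fGamma ih

theorem continuousAt_fGamma {x : ℝ} (hx : Irrational x) : ContinuousAt fGamma x := by
  rcases irrational_trichotomy hx with h | ⟨h, h'⟩ | h
  · have hc : ContinuousAt (fun y : ℝ => y + 1) x := by fun_prop
    refine hc.congr ?_
    filter_upwards [Iio_mem_nhds h] with y hy
    simp only [Set.mem_Iio] at hy
    simp [fGamma, hy.le]
  · have hc : ContinuousAt (fun y : ℝ => -1 / y) x :=
      continuousAt_const.div continuousAt_id hx.ne_zero
    refine hc.congr ?_
    filter_upwards [Ioo_mem_nhds h h'] with y hy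
    simp [fGamma, not_le.2 hy.1, hy.2]
  · have hc : ContinuousAt (fun y : ℝ => y - 1) x := by fun_prop
    refine hc.congr ?_
    filter_upwards [Ioi_mem_nhds h] with y hy
    simp only [Set.mem_Ioi] at hy
    have hy' : ¬ y ≤ -1 := by linarith
    simp [fGamma, hy', not_lt.2 hy.le]

theorem continuousAt_iterate_fGamma {x : ℝ} (hx : Irrational x) (n : ℕ) :
    ContinuousAt (fGamma^[n]) x := by
  induction n with
  | zero => exact continuousAt_id
  | succ n ih =>
    rw [Function.iterate_succ']
    exact (continuousAt_fGamma (irrational_iterate_fGamma hx n)).comp ih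

theorem continuousAt_symb {x : ℝ} (hx : Irrational x) : ContinuousAt symb x := by
  rcases irrational_trichotomy hx with h | ⟨h, h'⟩ | h
  · refine (continuousAt_const (y := 2)).congr ?_
    filter_upwards [Iio_mem_nhds h] with y hy
    simp only [Set.mem_Iio] at hy
    simp [symb, hy]
  · refine (continuousAt_const (y := 0)).congr ?_
    filter_upwards [Ioo_mem_nhds h h'] with y hy
    simp [symb, not_lt.2 hy.1.le, hy.2]
  · refine (continuousAt_const (y := 4)).congr ?_
    filter_upwards [Ioi_mem_nhds h] with y hy
    simp only [Set.mem_Ioi] at hy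
    have hy' : ¬ y < -1 := by linarith
    simp [symb, hy', not_lt.2 hy.le]

theorem stmt_5 :
    Continuous (fun x : {x : ℝ // Irrational x} => itin x.val) ∧
      ∀ x : ℝ, Irrational x → itin (fGamma x) = fun n => itin x (n + 1) := by
  refine ⟨continuous_pi fun n => continuous_iff_continuousAt.2 fun x => ?_, fun x _ => rfl⟩
  have h : ContinuousAt (symb ∘ fGamma^[n]) x.val :=
    (continuousAt_symb (irrational_iterate_fGamma x.2 n)).comp (continuousAt_iterate_fGamma x.2 n)
  exact h.comp continuous_subtype_val.continuousAt
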